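/- arXiv:1609.02490 — 2 statements merged into one kernel-verified Lean document; each statement's English description precedes it below -/
import Mathlib

section
/- There exists a constant c_{1/2} > 0 such that for every α ∈ ℝ^d with entries in [0,1], at least one entry equal to 1, and ‖α‖₂² > c_{1/2}, the Cauchy principal value PV ∫_{ℝ³} (i/(abc)) ∏_{i=1}^d (1 + α_i²(a²+b²+c²) + 2α_i³abc·i)^{−1/2} da db dc is a real number and is at least (1/8)·(‖α‖₃/‖α‖₂)³. -/
open MeasureTheory ProbabilityTheory Real Filter
open scoped Classical ENNReal NNReal

noncomputable section

/-- Euclidean inner product on `Fin d → ℝ`. -/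
def dotp {d : ℕ} (x y : Fin d → ℝ) : ℝ := ∑ i, x i * y i

/-- The `q`-norm of a vector `α ∈ ℝ^d`. -/
def nrm {d : ℕ} (q : ℕ) (α : Fin d → ℝ) : ℝ := (∑ i, α i ^ q) ^ ((1 : ℝ) / q)

/-- The centered Gaussian measure `N(0, D_α)` on `ℝ^d`, `D_α = diag α`. -/
def gaussPi (d : ℕ) (α : Fin d → ℝ) : Measure (Fin d → ℝ) :=
  Measure.pi fun i => gaussianReal 0 (Real.toNNReal (α i))

/-- The law of `n` i.i.d. samples from `N(0, D_α)`. -/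
def sampleMeasure (n d : ℕ) (α : Fin d → ℝ) : Measure (Fin n → Fin d → ℝ) :=
  Measure.pi fun _ => gaussPi d α

/-- `t` is the `p`-th upper quantile of `⟨X₁, X₂⟩` for `X₁, X₂` i.i.d. `N(0, D_α)`. -/
def IsThreshold (d : ℕ) (α : Fin d → ℝ) (p t : ℝ) : Prop :=
  ((gaussPi d α).prod (gaussPi d α)) {xy | t ≤ dotp xy.1 xy.2} = ENNReal.ofReal p

instance (n : ℕ) : MeasurableSpace (SimpleGraph (Fin n)) := ⊤

/-- The anisotropic random geometric graph `G(n, p, α)`, with threshold `t = t_{p,α}`. -/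
def geomGraph (n d : ℕ) (α : Fin d → ℝ) (t : ℝ) : Measure (SimpleGraph (Fin n)) :=
  Measure.map (fun X => SimpleGraph.fromRel fun i j => t ≤ dotp (X i) (X j))
    (sampleMeasure n d α)

/-- The Erdős–Rényi random graph `G(n, p)`. -/
def erGraph (n : ℕ) (p : ℝ) : Measure (SimpleGraph (Fin n)) :=
  Measure.map (fun x => SimpleGraph.fromRel fun i j => x s(i, j) ≤ p)
    (Measure.pi fun _ : Sym2 (Fin n) => volume.restrict (Set.Icc (0 : ℝ) 1))

/-- Total variation distance between two measures. -/
def tvDist {Ω : Type*} [MeasurableSpace Ω] (μ ν : Measure Ω) : ℝ :=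
  ⨆ s : {s : Set Ω // MeasurableSet s}, |(μ s.1).toReal - (ν s.1).toReal|

/-- Cauchy principal value of a triple integral:
`∫₀^∞∫₀^∞∫₀^∞ Δ_c Δ_b Δ_a g`, where `Δ_a g(a,b,c) = g(a,b,c) + g(-a,b,c)`, etc. -/
def pv3 (g : ℝ → ℝ → ℝ → ℂ) : ℂ :=
  ∫ a in Set.Ioi (0 : ℝ), ∫ b in Set.Ioi (0 : ℝ), ∫ c in Set.Ioi (0 : ℝ),
    (g a b c + g (-a) b c + g a (-b) c + g a b (-c)
      + g (-a) (-b) c + g (-a) b (-c) + g a (-b) (-c) + g (-a) (-b) (-c))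

/-- `∏_i (1 + α_i²(a²+b²+c²) + 2α_i³abc·i)^{-1/2}`, principal branch. -/
def wishChar (d : ℕ) (α : Fin d → ℝ) (a b c : ℝ) : ℂ :=
  ∏ i, ((1 : ℂ) + (α i : ℂ) ^ 2 * ((a : ℂ) ^ 2 + (b : ℂ) ^ 2 + (c : ℂ) ^ 2)
      + 2 * (α i : ℂ) ^ 3 * (a : ℂ) * (b : ℂ) * (c : ℂ) * Complex.I) ^ (-(1 / 2 : ℂ))

/-! The zero-diagonal symmetric matrix `A` with off-diagonal entries `a, b, c` has
`det (1 - i x A) = 1 + x² s + 2 i x³ p` for `s = a² + b² + c²` and `p = abc`. Changing one sign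
among `a, b, c` conjugates the product `W = ∏ (1 + α_i² s + 2 i α_i³ p)^(-1/2)`, so the eight terms
of the principal value add up to the real number `-8 Im W / p = 8 |W| sin T / p`, where `T` is half
the sum of the arguments of the factors. Write `n = ‖α‖₂²` and `m = ‖α‖₃³ ≤ n`; then
`0 ≤ T ≤ m p` and `|W| ≤ (1 + s)^(-n/2)`.

* On the cube `(0, n^(-1/2)]³` one has `n s ≤ 3` and `n p ≤ 1/2`, and the integrand is at least
  `m / 4`; this contributes `m n^(-3/2) / 4`.
* Where `m p ≤ 1`, the integrand is nonnegative.
* Where `m p > 1`, also `n² s³ ≥ n² p² > 1`, hence `n s ≥ n^(1/3)` and the integrand is at most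
  `8 m exp(-n^(1/3) / 8)` times an integrable weight, which is negligible against `m n^(-3/2)`. -/

lemma arg_le_im_of_one_le_re {z : ℂ} (hre : 1 ≤ z.re) (him : 0 ≤ z.im) : z.arg ≤ z.im := by
  have harg : z.arg < π / 2 :=
    (abs_lt.1 (Complex.abs_arg_lt_pi_div_two_iff.2 (.inl (by linarith)))).2
  calc z.arg ≤ tan z.arg := le_tan (Complex.arg_nonneg_iff.2 him) harg
    _ = z.im / z.re := Complex.tan_arg z
    _ ≤ z.im := div_le_self him hre

lemma im_div_norm_le_arg {z : ℂ} (him : 0 ≤ z.im) : z.im / ‖z‖ ≤ z.arg := by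
  rw [← Complex.sin_arg]
  exact sin_le (Complex.arg_nonneg_iff.2 him)

lemma norm_prod_cpow_ofReal {ι : Type*} (u : Finset ι) (z : ι → ℂ) (r : ℝ) :
    ‖∏ i ∈ u, z i ^ (r : ℂ)‖ = (∏ i ∈ u, ‖z i‖) ^ r := by
  rw [norm_prod, ← Real.finsetProd_rpow u _ fun i _ => norm_nonneg (z i)]
  simp only [Complex.norm_cpow_real]

lemma im_prod_cpow_ofReal {ι : Type*} (u : Finset ι) (z : ι → ℂ) (r : ℝ) :
    (∏ i ∈ u, z i ^ (r : ℂ)).im = ‖∏ i ∈ u, z i ^ (r : ℂ)‖ * sin (∑ i ∈ u, (z i).arg * r) := by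
  have polar (i : ι) :
      z i ^ (r : ℂ) = (‖z i‖ ^ r : ℝ) * Complex.exp (((z i).arg * r : ℝ) * Complex.I) := by
    rw [Complex.cpow_ofReal, Complex.exp_mul_I, Complex.ofReal_cos, Complex.ofReal_sin]
  have hprod : ∏ i ∈ u, z i ^ (r : ℂ) =
      (‖∏ i ∈ u, z i ^ (r : ℂ)‖ : ℝ) *
        Complex.exp ((∑ i ∈ u, (z i).arg * r : ℝ) * Complex.I) := by
    rw [norm_prod]
    simp only [Complex.norm_cpow_real]
    rw [Finset.prod_congr rfl fun i _ => polar i, Finset.prod_mul_distrib, ← Complex.exp_sum,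
      ← Finset.sum_mul, Complex.ofReal_prod, Complex.ofReal_sum]
  conv_lhs => rw [hprod]
  rw [Complex.im_ofReal_mul, Complex.exp_ofReal_mul_I_im]

/-- The factor `1 + x² s + 2 i x³ p` of the characteristic function, as a function of the
symmetric quantities `s = a² + b² + c²` and `p = abc`. -/
def wishFactor (x s p : ℝ) : ℂ :=
  (1 + x ^ 2 * s : ℝ) + (2 * x ^ 3 * p : ℝ) * Complex.I

section WishFactor

variable {x s p : ℝ}

@[simp]
lemma wishFactor_re (x s p : ℝ) : (wishFactor x s p).re = 1 + x ^ 2 * s := by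
  rw [wishFactor, ← Complex.mk_eq_add_mul_I]

@[simp]
lemma wishFactor_im (x s p : ℝ) : (wishFactor x s p).im = 2 * x ^ 3 * p := by
  rw [wishFactor, ← Complex.mk_eq_add_mul_I]

lemma wishFactor_neg (x s p : ℝ) :
    wishFactor x s (-p) = (starRingEnd ℂ) (wishFactor x s p) := by
  apply Complex.ext <;> simp

lemma wishFactor_re_pos (x p : ℝ) (hs : 0 ≤ s) : 0 < (wishFactor x s p).re := by
  rw [wishFactor_re]
  positivity

lemma wishFactor_mem_slitPlane (x p : ℝ) (hs : 0 ≤ s) : wishFactor x s p ∈ Complex.slitPlane :=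
  .inl (wishFactor_re_pos x p hs)

lemma norm_wishFactor_pos (x p : ℝ) (hs : 0 ≤ s) : 0 < ‖wishFactor x s p‖ :=
  (wishFactor_re_pos x p hs).trans_le (Complex.re_le_norm _)

lemma one_add_rpow_le_norm_wishFactor (hx : x ∈ Set.Icc (0 : ℝ) 1) (hs : 0 ≤ s) (p : ℝ) :
    (1 + s) ^ (x ^ 2) ≤ ‖wishFactor x s p‖ :=
  calc (1 + s) ^ (x ^ 2) ≤ 1 + x ^ 2 * s :=
        rpow_one_add_le_one_add_mul_self (by linarith) (sq_nonneg x) (pow_le_one₀ hx.1 hx.2)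
    _ = (wishFactor x s p).re := (wishFactor_re x s p).symm
    _ ≤ ‖wishFactor x s p‖ := Complex.re_le_norm _

lemma norm_wishFactor_le (hx : x ∈ Set.Icc (0 : ℝ) 1) (hs : 0 ≤ s) (hp : 0 ≤ p) :
    ‖wishFactor x s p‖ ≤ 1 + x ^ 2 * (s + 2 * p) := by
  have hx0 : 0 ≤ x := hx.1
  calc ‖wishFactor x s p‖ ≤ |(wishFactor x s p).re| + |(wishFactor x s p).im| :=
        Complex.norm_le_abs_re_add_abs_im _
    _ = 1 + x ^ 2 * s + 2 * x ^ 3 * p := by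
        rw [wishFactor_re, wishFactor_im, abs_of_nonneg (by positivity),
          abs_of_nonneg (by positivity)]
    _ ≤ 1 + x ^ 2 * s + 2 * x ^ 2 * p := by
        gcongr 1 + x ^ 2 * s + 2 * ?_ * p
        exact pow_le_pow_of_le_one hx0 hx.2 (by norm_num)
    _ = 1 + x ^ 2 * (s + 2 * p) := by ring

lemma wishFactor_arg_nonneg (s : ℝ) (hx : 0 ≤ x) (hp : 0 ≤ p) : 0 ≤ (wishFactor x s p).arg := by
  rw [Complex.arg_nonneg_iff, wishFactor_im]
  positivity

lemma wishFactor_arg_le (hx : 0 ≤ x) (hs : 0 ≤ s) (hp : 0 ≤ p) :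
    (wishFactor x s p).arg ≤ 2 * x ^ 3 * p := by
  rw [← wishFactor_im x s p]
  apply arg_le_im_of_one_le_re
  · rw [wishFactor_re, le_add_iff_nonneg_right]
    positivity
  · rw [wishFactor_im]
    positivity

lemma le_wishFactor_arg (hx : x ∈ Set.Icc (0 : ℝ) 1) (hs : 0 ≤ s) (hp : 0 ≤ p)
    (hsp : s + 2 * p ≤ 1) : x ^ 3 * p ≤ (wishFactor x s p).arg := by
  have hx0 : 0 ≤ x := hx.1
  have him : 0 ≤ (wishFactor x s p).im := by
    rw [wishFactor_im]
    positivity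
  have hnorm : ‖wishFactor x s p‖ ≤ 2 :=
    calc ‖wishFactor x s p‖ ≤ 1 + x ^ 2 * (s + 2 * p) := norm_wishFactor_le hx hs hp
      _ ≤ 1 + 1 * 1 := by
          gcongr
          exact pow_le_one₀ hx0 hx.2
      _ = 2 := by norm_num
  calc x ^ 3 * p = (wishFactor x s p).im / 2 := by rw [wishFactor_im]; ring
    _ ≤ (wishFactor x s p).im / ‖wishFactor x s p‖ :=
        div_le_div_of_nonneg_left him (norm_wishFactor_pos x p hs) hnorm
    _ ≤ (wishFactor x s p).arg := im_div_norm_le_arg him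

end WishFactor

section PowSum

variable {ι : Type*} [Fintype ι] {α : ι → ℝ}

/-- The power sum `∑ α_i^q`, which is `‖α‖_q^q` for nonnegative `α`. -/
def powSum (q : ℕ) (α : ι → ℝ) : ℝ := ∑ i, α i ^ q

lemma powSum_nonneg (q : ℕ) (hα : ∀ i, 0 ≤ α i) : 0 ≤ powSum q α :=
  Finset.sum_nonneg fun i _ => pow_nonneg (hα i) q

lemma powSum_anti (hα : ∀ i, α i ∈ Set.Icc (0 : ℝ) 1) : Antitone (powSum · α) :=
  fun _ _ hqr => Finset.sum_le_sum fun i _ => pow_le_pow_of_le_one (hα i).1 (hα i).2 hqr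

lemma nrm_pow {d q : ℕ} {α : Fin d → ℝ} (hq : q ≠ 0) (hα : ∀ i, 0 ≤ α i) :
    nrm q α ^ q = powSum q α := by
  rw [nrm, one_div]
  exact rpow_inv_natCast_pow (powSum_nonneg q hα) hq

lemma nrm_three_div_nrm_two_pow_three {d : ℕ} {α : Fin d → ℝ} (hα : ∀ i, 0 ≤ α i) :
    (nrm 3 α / nrm 2 α) ^ 3 = powSum 3 α * powSum 2 α ^ (-(3 / 2) : ℝ) := by
  have hcube : nrm 2 α ^ 3 = powSum 2 α ^ (3 / 2 : ℝ) := by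
    change (powSum 2 α ^ ((1 : ℝ) / (2 : ℕ))) ^ 3 = _
    rw [← rpow_mul_natCast (powSum_nonneg 2 hα)]
    norm_num
  rw [div_pow, nrm_pow three_ne_zero hα, hcube, rpow_neg (powSum_nonneg 2 hα), div_eq_mul_inv]

end PowSum

section WishProd

variable {ι : Type*} [Fintype ι] {α : ι → ℝ} {s p : ℝ}

/-- `wishChar` as a function of `s = a² + b² + c²` and `p = abc`. -/
def wishProd (α : ι → ℝ) (s p : ℝ) : ℂ := ∏ i, wishFactor (α i) s p ^ ((-(1 / 2) : ℝ) : ℂ)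

/-- Minus the argument (not reduced modulo `2π`) of `wishProd α s p`. -/
def wishPhase (α : ι → ℝ) (s p : ℝ) : ℝ := (∑ i, (wishFactor (α i) s p).arg) / 2

lemma wishChar_eq_wishProd (d : ℕ) (α : Fin d → ℝ) (a b c : ℝ) :
    wishChar d α a b c = wishProd α (a ^ 2 + b ^ 2 + c ^ 2) (a * b * c) := by
  refine Finset.prod_congr rfl fun i _ => ?_
  simp only [wishFactor]
  push_cast
  ring_nf

lemma wishProd_neg (α : ι → ℝ) (hs : 0 ≤ s) (p : ℝ) :
    wishProd α s (-p) = (starRingEnd ℂ) (wishProd α s p) := by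
  simp only [wishProd, map_prod]
  refine Finset.prod_congr rfl fun i _ => ?_
  have harg := Complex.slitPlane_arg_ne_pi (wishFactor_mem_slitPlane (α i) p hs)
  rw [wishFactor_neg, Complex.conj_cpow _ _ harg, Complex.conj_ofReal]

lemma wishProd_im (α : ι → ℝ) (s p : ℝ) :
    (wishProd α s p).im = -(‖wishProd α s p‖ * sin (wishPhase α s p)) := by
  rw [wishProd, im_prod_cpow_ofReal, ← Finset.sum_mul, ← mul_neg, ← sin_neg, wishPhase]
  ring_nf

lemma norm_wishProd_le (hα : ∀ i, α i ∈ Set.Icc (0 : ℝ) 1) (hs : 0 ≤ s) (p : ℝ) :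
    ‖wishProd α s p‖ ≤ (1 + s) ^ (-powSum 2 α / 2) := by
  have hprod : (1 + s) ^ powSum 2 α ≤ ∏ i, ‖wishFactor (α i) s p‖ := by
    rw [powSum, rpow_sum_of_pos (by linarith)]
    exact Finset.prod_le_prod (fun i _ => by positivity) fun i _ =>
      one_add_rpow_le_norm_wishFactor (hα i) hs p
  calc ‖wishProd α s p‖ = (∏ i, ‖wishFactor (α i) s p‖) ^ (-(1 / 2) : ℝ) :=
        norm_prod_cpow_ofReal _ _ _
    _ ≤ ((1 + s) ^ powSum 2 α) ^ (-(1 / 2) : ℝ) :=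
        rpow_le_rpow_of_nonpos (by positivity) hprod (by norm_num)
    _ = (1 + s) ^ (-powSum 2 α / 2) := by
        rw [← rpow_mul (by linarith)]
        ring_nf

lemma exp_neg_le_norm_wishProd (hα : ∀ i, α i ∈ Set.Icc (0 : ℝ) 1) (hs : 0 ≤ s) (hp : 0 ≤ p) :
    exp (-(powSum 2 α * (s + 2 * p)) / 2) ≤ ‖wishProd α s p‖ := by
  have hprod : ∏ i, ‖wishFactor (α i) s p‖ ≤ exp (powSum 2 α * (s + 2 * p)) := by
    rw [powSum, Finset.sum_mul, exp_sum]
    refine Finset.prod_le_prod (fun i _ => norm_nonneg _) fun i _ => ?_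
    calc ‖wishFactor (α i) s p‖ ≤ 1 + α i ^ 2 * (s + 2 * p) := norm_wishFactor_le (hα i) hs hp
      _ ≤ exp (α i ^ 2 * (s + 2 * p)) := by
          rw [add_comm]
          exact add_one_le_exp _
  have hpos : 0 < ∏ i, ‖wishFactor (α i) s p‖ :=
    Finset.prod_pos fun i _ => norm_wishFactor_pos (α i) p hs
  calc exp (-(powSum 2 α * (s + 2 * p)) / 2)
      = exp (powSum 2 α * (s + 2 * p)) ^ (-(1 / 2) : ℝ) := by
        rw [← exp_mul]
        ring_nf
    _ ≤ (∏ i, ‖wishFactor (α i) s p‖) ^ (-(1 / 2) : ℝ) :=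
        rpow_le_rpow_of_nonpos hpos hprod (by norm_num)
    _ = ‖wishProd α s p‖ := (norm_prod_cpow_ofReal _ _ _).symm

lemma wishPhase_nonneg (s : ℝ) (hα : ∀ i, 0 ≤ α i) (hp : 0 ≤ p) : 0 ≤ wishPhase α s p :=
  div_nonneg (Finset.sum_nonneg fun i _ => wishFactor_arg_nonneg s (hα i) hp) zero_le_two

lemma wishPhase_le (hα : ∀ i, 0 ≤ α i) (hs : 0 ≤ s) (hp : 0 ≤ p) :
    wishPhase α s p ≤ powSum 3 α * p := by
  have hsum : ∑ i, (wishFactor (α i) s p).arg ≤ ∑ i, 2 * α i ^ 3 * p :=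
    Finset.sum_le_sum fun i _ => wishFactor_arg_le (hα i) hs hp
  rw [← Finset.sum_mul, ← Finset.mul_sum] at hsum
  rw [wishPhase, powSum]
  linarith

lemma le_wishPhase (hα : ∀ i, α i ∈ Set.Icc (0 : ℝ) 1) (hs : 0 ≤ s) (hp : 0 ≤ p)
    (hsp : s + 2 * p ≤ 1) : powSum 3 α * p / 2 ≤ wishPhase α s p := by
  rw [wishPhase, powSum, Finset.sum_mul]
  gcongr with i
  exact le_wishFactor_arg (hα i) hs hp hsp

end WishProd

section PvKernel

variable {ι : Type*} [Fintype ι] {α : ι → ℝ} {s p : ℝ}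

/-- The sum over all sign changes of `a, b, c` of the principal value integrand, as a function of
`s = a² + b² + c²` and `p = abc`. -/
def pvKernel (α : ι → ℝ) (s p : ℝ) : ℝ := -8 * (wishProd α s p).im / p

lemma pvKernel_eq (α : ι → ℝ) (s p : ℝ) :
    pvKernel α s p = 8 * ‖wishProd α s p‖ * sin (wishPhase α s p) / p := by
  rw [pvKernel, wishProd_im]
  ring

lemma sum_signs_wishChar {d : ℕ} (α : Fin d → ℝ) {g : ℝ → ℝ → ℝ → ℂ}
    (hg : ∀ a b c : ℝ,
      g a b c = Complex.I / ((a : ℂ) * (b : ℂ) * (c : ℂ)) * wishChar d α a b c)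
    (a b c : ℝ) :
    g a b c + g (-a) b c + g a (-b) c + g a b (-c)
      + g (-a) (-b) c + g (-a) b (-c) + g a (-b) (-c) + g (-a) (-b) (-c)
      = (pvKernel α (a ^ 2 + b ^ 2 + c ^ 2) (a * b * c) : ℂ) := by
  have hs : 0 ≤ a ^ 2 + b ^ 2 + c ^ 2 := by positivity
  simp only [hg, wishChar_eq_wishProd, neg_sq, neg_mul, mul_neg, neg_neg, Complex.ofReal_neg,
    wishProd_neg α hs, div_neg]
  generalize hW : wishProd α (a ^ 2 + b ^ 2 + c ^ 2) (a * b * c) = W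
  calc _ = 4 * Complex.I * (W - (starRingEnd ℂ) W) / (a * b * c) := by ring
    _ = 8 * Complex.I ^ 2 * W.im / (a * b * c) := by
        rw [Complex.sub_conj]
        push_cast
        ring
    _ = (pvKernel α (a ^ 2 + b ^ 2 + c ^ 2) (a * b * c) : ℂ) := by
        rw [pvKernel, hW, Complex.I_sq]
        push_cast
        ring

lemma abs_pvKernel_le (hα : ∀ i, α i ∈ Set.Icc (0 : ℝ) 1) (hs : 0 ≤ s) (hp : 0 < p) :
    |pvKernel α s p| ≤ 8 * powSum 3 α * (1 + s) ^ (-powSum 2 α / 2) := by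
  have hsin : |sin (wishPhase α s p)| ≤ powSum 3 α * p :=
    calc |sin (wishPhase α s p)| ≤ |wishPhase α s p| := abs_sin_le_abs
      _ = wishPhase α s p := abs_of_nonneg (wishPhase_nonneg s (fun i => (hα i).1) hp.le)
      _ ≤ powSum 3 α * p := wishPhase_le (fun i => (hα i).1) hs hp.le
  rw [pvKernel_eq, abs_div, abs_of_pos hp, div_le_iff₀ hp, abs_mul, abs_of_nonneg (by positivity)]
  calc 8 * ‖wishProd α s p‖ * |sin (wishPhase α s p)|
      ≤ 8 * (1 + s) ^ (-powSum 2 α / 2) * (powSum 3 α * p) := by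
        gcongr
        exact norm_wishProd_le hα hs p
    _ = 8 * powSum 3 α * (1 + s) ^ (-powSum 2 α / 2) * p := by ring

lemma pvKernel_nonneg (hα : ∀ i, 0 ≤ α i) (hs : 0 ≤ s) (hp : 0 ≤ p) (hmp : powSum 3 α * p ≤ π) :
    0 ≤ pvKernel α s p := by
  have hsin : 0 ≤ sin (wishPhase α s p) :=
    sin_nonneg_of_nonneg_of_le_pi (wishPhase_nonneg s hα hp) ((wishPhase_le hα hs hp).trans hmp)
  rw [pvKernel_eq]
  positivity

lemma le_pvKernel (hα : ∀ i, α i ∈ Set.Icc (0 : ℝ) 1) (hs : 0 ≤ s) (hp : 0 < p)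
    (hsp : s + 2 * p ≤ 1) (hmp : powSum 3 α * p ≤ π / 2) :
    2 * powSum 3 α * exp (-(powSum 2 α * (s + 2 * p)) / 2) ≤ pvKernel α s p := by
  have hα0 (i : ι) : 0 ≤ α i := (hα i).1
  have hm : 0 ≤ powSum 3 α := powSum_nonneg 3 hα0
  have hT : 0 ≤ wishPhase α s p := wishPhase_nonneg s hα0 hp.le
  have hπ : (1 / 2 : ℝ) ≤ 2 / π := by
    rw [div_le_div_iff₀ two_pos pi_pos]
    linarith [pi_le_four]
  have hsin : powSum 3 α * p / 4 ≤ sin (wishPhase α s p) :=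
    calc powSum 3 α * p / 4 = 1 / 2 * (powSum 3 α * p / 2) := by ring
      _ ≤ 2 / π * wishPhase α s p := by
          gcongr
          exact le_wishPhase hα hs hp.le hsp
      _ ≤ sin (wishPhase α s p) := mul_le_sin hT ((wishPhase_le hα0 hs hp.le).trans hmp)
  rw [pvKernel_eq, le_div_iff₀ hp]
  calc 2 * powSum 3 α * exp (-(powSum 2 α * (s + 2 * p)) / 2) * p
      = 8 * exp (-(powSum 2 α * (s + 2 * p)) / 2) * (powSum 3 α * p / 4) := by ring
    _ ≤ 8 * ‖wishProd α s p‖ * sin (wishPhase α s p) := by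
        gcongr
        exact exp_neg_le_norm_wishProd hα hs hp.le

lemma exp_two_le_eight : exp 2 ≤ 8 :=
  calc exp 2 = exp 1 ^ 2 := by rw [← exp_nat_mul, Nat.cast_ofNat, mul_one]
    _ ≤ 2.75 ^ 2 := by
        gcongr
        linarith [exp_one_lt_d9]
    _ ≤ 8 := by norm_num

lemma le_pvKernel_of_powSum_mul_le (hα : ∀ i, α i ∈ Set.Icc (0 : ℝ) 1) (hn : 4 ≤ powSum 2 α)
    (hs : 0 ≤ s) (hp : 0 < p) (hns : powSum 2 α * s ≤ 3) (hnp : powSum 2 α * p ≤ 1 / 2) :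
    powSum 3 α / 4 ≤ pvKernel α s p := by
  have hm : 0 ≤ powSum 3 α := powSum_nonneg 3 fun i => (hα i).1
  have hsp : s + 2 * p ≤ 1 := by
    have : 4 * (s + 2 * p) ≤ powSum 2 α * (s + 2 * p) := by gcongr
    linarith
  have hmp : powSum 3 α * p ≤ π / 2 :=
    calc powSum 3 α * p ≤ powSum 2 α * p := by
          gcongr
          exact powSum_anti hα (by norm_num)
      _ ≤ π / 2 := by linarith [pi_gt_three]
  calc powSum 3 α / 4 = 2 * powSum 3 α * 8⁻¹ := by ring
    _ ≤ 2 * powSum 3 α * exp (-2) := by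
        rw [exp_neg]
        gcongr
        exact exp_two_le_eight
    _ ≤ 2 * powSum 3 α * exp (-(powSum 2 α * (s + 2 * p)) / 2) := by
        gcongr
        linarith
    _ ≤ pvKernel α s p := le_pvKernel hα hs hp hsp hmp

lemma measurable_pvKernel_comp {X : Type*} [MeasurableSpace X] (α : ι → ℝ) {s p : X → ℝ}
    (hs : Measurable s) (hp : Measurable p) : Measurable fun v => pvKernel α (s v) (p v) := by
  unfold pvKernel wishProd wishFactor
  fun_prop

end PvKernel

lemma sq_mul_mul_le_cube (a b c : ℝ) : (a * b * c) ^ 2 ≤ (a ^ 2 + b ^ 2 + c ^ 2) ^ 3 := by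
  set s := a ^ 2 + b ^ 2 + c ^ 2
  calc (a * b * c) ^ 2 = a ^ 2 * b ^ 2 * c ^ 2 := by ring
    _ ≤ s * s * s := by
        gcongr <;> linarith [sq_nonneg a, sq_nonneg b, sq_nonneg c]
    _ = s ^ 3 := by ring

lemma one_add_rpow_le_exp {n s : ℝ} (hn : 1 ≤ n) (hs : 0 ≤ s) (h : 1 ≤ n ^ 2 * s ^ 3) :
    (1 + s) ^ (-n / 4) ≤ exp (-(1 / 8) * n ^ (1 / 3 : ℝ)) := by
  have hn0 : 0 < n := by linarith
  set u := n ^ (1 / 3 : ℝ)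
  have hu : 1 ≤ u := one_le_rpow hn (by norm_num)
  have hun : u ^ 3 = n := by
    rw [← rpow_mul_natCast hn0.le]
    norm_num
  have hsu : (u ^ 2)⁻¹ ≤ s := by
    rw [inv_le_iff_one_le_mul₀ (by positivity)]
    refine (one_le_pow_iff_of_nonneg (by positivity) three_ne_zero).1 ?_
    calc 1 ≤ n ^ 2 * s ^ 3 := h
      _ = (s * u ^ 2) ^ 3 := by
          rw [← hun]
          ring
  have hlog : (u ^ 2)⁻¹ / 2 ≤ log (1 + s) :=
    calc (u ^ 2)⁻¹ / 2 = 2 * (u ^ 2)⁻¹ / 4 := by ring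
      _ ≤ 2 * (u ^ 2)⁻¹ / ((u ^ 2)⁻¹ + 2) := by
          gcongr
          linarith [inv_le_one_of_one_le₀ (one_le_pow₀ hu : 1 ≤ u ^ 2)]
      _ ≤ log (1 + (u ^ 2)⁻¹) := le_log_one_add_of_nonneg (by positivity)
      _ ≤ log (1 + s) := by gcongr
  rw [rpow_def_of_pos (by positivity), exp_le_exp]
  calc log (1 + s) * (-n / 4) = -(n / 4 * log (1 + s)) := by ring
    _ ≤ -(n / 4 * ((u ^ 2)⁻¹ / 2)) := by gcongr
    _ = -(1 / 8) * u := by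
        rw [← hun]
        field_simp
        norm_num

lemma isLittleO_exp_neg_mul_rpow_rpow_atTop {k r : ℝ} (hk : 0 < k) (hr : 0 < r) (q : ℝ) :
    (fun x : ℝ => exp (-k * x ^ r)) =o[atTop] fun x => x ^ q := by
  refine ((isLittleO_exp_neg_mul_rpow_atTop hk (q / r)).comp_tendsto
    (tendsto_rpow_atTop hr)).congr' .rfl ?_
  filter_upwards [eventually_ge_atTop 0] with x hx
  rw [Function.comp_apply, ← rpow_mul hx, mul_div_cancel₀ q hr.ne']

lemma mul_measureReal_sub_integral_le_integral {X : Type*} [MeasurableSpace X] {μ : Measure X}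
    {f g : X → ℝ} {C : Set X} {m : ℝ} (hC : MeasurableSet C) (hμC : μ C ≠ ∞)
    (hf : Integrable f μ) (hg : Integrable g μ) (hgf : ∀ᵐ x ∂μ, -g x ≤ f x)
    (hm : ∀ x ∈ C, m ≤ f x + g x) : m * μ.real C - ∫ x, g x ∂μ ≤ ∫ x, f x ∂μ := by
  have hnonneg : 0 ≤ᵐ[μ] fun x => f x + g x := by
    filter_upwards [hgf] with x hx
    simp only [Pi.zero_apply]
    linarith
  rw [sub_le_iff_le_add]
  calc m * μ.real C ≤ ∫ x in C, (f x + g x) ∂μ :=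
        setIntegral_ge_of_const_le_real hC hμC hm (hf.add hg).integrableOn
    _ ≤ ∫ x, (f x + g x) ∂μ := setIntegral_le_integral (hf.add hg) hnonneg
    _ = ∫ x, f x ∂μ + ∫ x, g x ∂μ := integral_add hf hg

section Octant

/-- The open positive octant of `ℝ³`, over which `pv3` integrates. -/
def positiveOctant : Set (ℝ × ℝ × ℝ) := Set.Ioi 0 ×ˢ Set.Ioi 0 ×ˢ Set.Ioi 0

/-- The cube `(0, t]³`. -/
def octantCube (t : ℝ) : Set (ℝ × ℝ × ℝ) := Set.Ioc 0 t ×ˢ Set.Ioc 0 t ×ˢ Set.Ioc 0 t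

/-- The integrable weight `∏ (1 + x²)⁻¹` on `ℝ³`, used as a dominating function. -/
def cauchyWeight (v : ℝ × ℝ × ℝ) : ℝ :=
  (1 + v.1 ^ 2)⁻¹ * ((1 + v.2.1 ^ 2)⁻¹ * (1 + v.2.2 ^ 2)⁻¹)

lemma measurableSet_positiveOctant : MeasurableSet positiveOctant :=
  measurableSet_Ioi.prod (measurableSet_Ioi.prod measurableSet_Ioi)

lemma measurableSet_octantCube (t : ℝ) : MeasurableSet (octantCube t) :=
  measurableSet_Ioc.prod (measurableSet_Ioc.prod measurableSet_Ioc)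

lemma octantCube_subset_positiveOctant (t : ℝ) : octantCube t ⊆ positiveOctant :=
  Set.prod_mono Set.Ioc_subset_Ioi_self
    (Set.prod_mono Set.Ioc_subset_Ioi_self Set.Ioc_subset_Ioi_self)

lemma volume_restrict_positiveOctant_octantCube (t : ℝ) :
    volume.restrict positiveOctant (octantCube t) = ENNReal.ofReal t ^ 3 := by
  rw [Measure.restrict_eq_self _ (octantCube_subset_positiveOctant t)]
  simp only [octantCube, Measure.volume_eq_prod, Measure.prod_prod, Real.volume_Ioc, sub_zero]
  ring

lemma cauchyWeight_nonneg (v : ℝ × ℝ × ℝ) : 0 ≤ cauchyWeight v := by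
  unfold cauchyWeight
  positivity

lemma integrable_cauchyWeight : Integrable cauchyWeight :=
  integrable_inv_one_add_sq.mul_prod (integrable_inv_one_add_sq.mul_prod integrable_inv_one_add_sq)

lemma setIntegral_cauchyWeight : ∫ v in positiveOctant, cauchyWeight v = (π / 2) ^ 3 := by
  have hline : ∫ x in Set.Ioi (0 : ℝ), (1 + x ^ 2)⁻¹ = π / 2 := by
    rw [integral_Ioi_inv_one_add_sq, arctan_zero, sub_zero]
  have hplane := setIntegral_prod_mul (μ := volume) (ν := volume)
    (fun x : ℝ => (1 + x ^ 2)⁻¹) (fun x : ℝ => (1 + x ^ 2)⁻¹) (Set.Ioi 0) (Set.Ioi 0)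
  have hspace := setIntegral_prod_mul (μ := volume) (ν := volume) (fun x : ℝ => (1 + x ^ 2)⁻¹)
    (fun w : ℝ × ℝ => (1 + w.1 ^ 2)⁻¹ * (1 + w.2 ^ 2)⁻¹) (Set.Ioi 0) (Set.Ioi 0 ×ˢ Set.Ioi 0)
  rw [Measure.volume_eq_prod ℝ ℝ, hplane, hline] at hspace
  calc ∫ v in positiveOctant, cauchyWeight v = π / 2 * (π / 2 * (π / 2)) := hspace
    _ = (π / 2) ^ 3 := by ring

lemma one_add_rpow_le_cauchyWeight {n : ℝ} (hn : 12 ≤ n) (a b c : ℝ) :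
    (1 + (a ^ 2 + b ^ 2 + c ^ 2)) ^ (-n / 4) ≤ cauchyWeight (a, b, c) := by
  set s := a ^ 2 + b ^ 2 + c ^ 2
  have hs0 : 0 ≤ s := by positivity
  calc (1 + s) ^ (-n / 4) ≤ (1 + s) ^ (-(3 : ℕ) : ℝ) := by
        gcongr
        · linarith
        · push_cast
          linarith
    _ = ((1 + s) * ((1 + s) * (1 + s)))⁻¹ := by
        rw [rpow_neg (by positivity), rpow_natCast]
        ring_nf
    _ ≤ ((1 + a ^ 2) * ((1 + b ^ 2) * (1 + c ^ 2)))⁻¹ := by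
        gcongr <;> linarith [sq_nonneg a, sq_nonneg b, sq_nonneg c]
    _ = cauchyWeight (a, b, c) := by rw [cauchyWeight, mul_inv, mul_inv]

lemma pv3_eq_setIntegral {g : ℝ → ℝ → ℝ → ℂ} {h : ℝ × ℝ × ℝ → ℝ}
    (hh : IntegrableOn h positiveOctant)
    (hgh : ∀ a b c : ℝ, 0 < a → 0 < b → 0 < c →
      g a b c + g (-a) b c + g a (-b) c + g a b (-c)
        + g (-a) (-b) c + g (-a) b (-c) + g a (-b) (-c) + g (-a) (-b) (-c) = (h (a, b, c) : ℂ)) :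
    pv3 g = (∫ v in positiveOctant, h v : ℝ) := by
  have hsection : ∀ᵐ a ∂volume.restrict (Set.Ioi (0 : ℝ)),
      IntegrableOn (fun w => h (a, w)) (Set.Ioi 0 ×ˢ Set.Ioi 0) := by
    rw [IntegrableOn, positiveOctant, Measure.volume_eq_prod, ← Measure.prod_restrict] at hh
    exact hh.prod_right_ae
  have hfubini : ∫ v in positiveOctant, h v =
      ∫ a in Set.Ioi (0 : ℝ), ∫ b in Set.Ioi (0 : ℝ), ∫ c in Set.Ioi (0 : ℝ), h (a, b, c) := by
    rw [positiveOctant, Measure.volume_eq_prod, setIntegral_prod _ hh]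
    refine integral_congr_ae ?_
    filter_upwards [hsection] with a ha
    exact setIntegral_prod _ ha
  rw [hfubini, pv3, ← integral_complex_ofReal]
  refine setIntegral_congr_fun measurableSet_Ioi fun a ha => ?_
  rw [← integral_complex_ofReal]
  refine setIntegral_congr_fun measurableSet_Ioi fun b hb => ?_
  rw [← integral_complex_ofReal]
  exact setIntegral_congr_fun measurableSet_Ioi fun c hc => hgh a b c ha hb hc

end Octant

section PvDensity

variable {ι : Type*} [Fintype ι] {α : ι → ℝ}

/-- The symmetrized principal value integrand as a function on `ℝ³`. -/
def pvDensity (α : ι → ℝ) (v : ℝ × ℝ × ℝ) : ℝ :=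
  pvKernel α (v.1 ^ 2 + v.2.1 ^ 2 + v.2.2 ^ 2) (v.1 * v.2.1 * v.2.2)

lemma abs_pvDensity_le (hα : ∀ i, α i ∈ Set.Icc (0 : ℝ) 1) (hn : 12 ≤ powSum 2 α)
    {v : ℝ × ℝ × ℝ} (hv : v ∈ positiveOctant) :
    |pvDensity α v| ≤ 8 * powSum 3 α *
      ((1 + (v.1 ^ 2 + v.2.1 ^ 2 + v.2.2 ^ 2)) ^ (-powSum 2 α / 4) * cauchyWeight v) := by
  obtain ⟨a, b, c⟩ := v
  obtain ⟨ha : 0 < a, hb : 0 < b, hc : 0 < c⟩ := hv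
  have hm : 0 ≤ powSum 3 α := powSum_nonneg 3 fun i => (hα i).1
  have hs : 0 ≤ a ^ 2 + b ^ 2 + c ^ 2 := by positivity
  calc |pvDensity α (a, b, c)|
      ≤ 8 * powSum 3 α * (1 + (a ^ 2 + b ^ 2 + c ^ 2)) ^ (-powSum 2 α / 2) :=
        abs_pvKernel_le hα hs (by positivity)
    _ = 8 * powSum 3 α * ((1 + (a ^ 2 + b ^ 2 + c ^ 2)) ^ (-powSum 2 α / 4) *
          (1 + (a ^ 2 + b ^ 2 + c ^ 2)) ^ (-powSum 2 α / 4)) := by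
        rw [← rpow_add (by positivity)]
        ring_nf
    _ ≤ _ := by
        gcongr
        exact one_add_rpow_le_cauchyWeight hn a b c

lemma integrableOn_pvDensity (hα : ∀ i, α i ∈ Set.Icc (0 : ℝ) 1) (hn : 12 ≤ powSum 2 α) :
    IntegrableOn (pvDensity α) positiveOctant := by
  have hm : 0 ≤ powSum 3 α := powSum_nonneg 3 fun i => (hα i).1
  have hmeas : Measurable (pvDensity α) := measurable_pvKernel_comp α (by fun_prop) (by fun_prop)
  refine (integrable_cauchyWeight.integrableOn.const_mul (8 * powSum 3 α)).mono'
    hmeas.aestronglyMeasurable (ae_restrict_of_forall_mem measurableSet_positiveOctant ?_)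
  intro v hv
  refine (abs_pvDensity_le hα hn hv).trans ?_
  gcongr
  refine mul_le_of_le_one_left (cauchyWeight_nonneg v) (rpow_le_one_of_one_le_of_nonpos ?_ ?_)
  · linarith [sq_nonneg v.1, sq_nonneg v.2.1, sq_nonneg v.2.2]
  · linarith

lemma neg_le_pvDensity (hα : ∀ i, α i ∈ Set.Icc (0 : ℝ) 1) (hn : 12 ≤ powSum 2 α)
    {v : ℝ × ℝ × ℝ} (hv : v ∈ positiveOctant) :
    -(8 * powSum 3 α * (exp (-(1 / 8) * powSum 2 α ^ (1 / 3 : ℝ)) * cauchyWeight v))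
      ≤ pvDensity α v := by
  have hα0 (i : ι) : 0 ≤ α i := (hα i).1
  have hm : 0 ≤ powSum 3 α := powSum_nonneg 3 hα0
  have hw : 0 ≤ cauchyWeight v := cauchyWeight_nonneg v
  have habs := neg_le_of_abs_le (abs_pvDensity_le hα hn hv)
  obtain ⟨a, b, c⟩ := v
  obtain ⟨ha : 0 < a, hb : 0 < b, hc : 0 < c⟩ := hv
  have hp : 0 < a * b * c := by positivity
  have hs : 0 ≤ a ^ 2 + b ^ 2 + c ^ 2 := by positivity
  rcases le_or_gt (powSum 3 α * (a * b * c)) 1 with hsmall | hlarge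
  · have hK : 0 ≤ pvDensity α (a, b, c) :=
      pvKernel_nonneg hα0 hs hp.le (hsmall.trans (by linarith [pi_gt_three]))
    exact le_trans (neg_nonpos.2 (by positivity)) hK
  · have hnp : 1 ≤ powSum 2 α * (a * b * c) :=
      hlarge.le.trans (mul_le_mul_of_nonneg_right (powSum_anti hα (by norm_num)) hp.le)
    have hns : 1 ≤ powSum 2 α ^ 2 * (a ^ 2 + b ^ 2 + c ^ 2) ^ 3 :=
      calc 1 ≤ (powSum 2 α * (a * b * c)) ^ 2 := one_le_pow₀ hnp
        _ = powSum 2 α ^ 2 * (a * b * c) ^ 2 := mul_pow _ _ 2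
        _ ≤ powSum 2 α ^ 2 * (a ^ 2 + b ^ 2 + c ^ 2) ^ 3 := by
            gcongr
            exact sq_mul_mul_le_cube a b c
    refine le_trans (neg_le_neg ?_) habs
    gcongr
    exact one_add_rpow_le_exp (by linarith) hs hns

lemma le_pvDensity_of_mem_octantCube (hα : ∀ i, α i ∈ Set.Icc (0 : ℝ) 1) (hn : 4 ≤ powSum 2 α)
    {v : ℝ × ℝ × ℝ} (hv : v ∈ octantCube (powSum 2 α ^ (-(1 / 2) : ℝ))) :
    powSum 3 α / 4 ≤ pvDensity α v := by
  set n := powSum 2 α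
  set t := n ^ (-(1 / 2) : ℝ)
  obtain ⟨a, b, c⟩ := v
  obtain ⟨⟨ha : 0 < a, hat : a ≤ t⟩, ⟨hb : 0 < b, hbt : b ≤ t⟩, ⟨hc : 0 < c, hct : c ≤ t⟩⟩ := hv
  have hnt : n * t ^ 2 = 1 := by
    rw [← rpow_mul_natCast (by linarith)]
    norm_num [rpow_neg_one, mul_inv_cancel₀ (show n ≠ 0 by linarith)]
  have ht : t ≤ 1 / 2 := by
    refine (sq_le_sq₀ (by linarith) (by norm_num)).1 ?_
    nlinarith [sq_nonneg t]
  have hp : 0 < a * b * c := by positivity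
  have hs : 0 ≤ a ^ 2 + b ^ 2 + c ^ 2 := by positivity
  have hns : n * (a ^ 2 + b ^ 2 + c ^ 2) ≤ 3 :=
    calc n * (a ^ 2 + b ^ 2 + c ^ 2) ≤ n * (t ^ 2 + t ^ 2 + t ^ 2) := by gcongr
      _ = 3 := by linarith
  have hnp : n * (a * b * c) ≤ 1 / 2 :=
    calc n * (a * b * c) ≤ n * (t * t * t) := by gcongr
      _ = n * t ^ 2 * t := by ring
      _ ≤ 1 / 2 := by rwa [hnt, one_mul]
  exact le_pvKernel_of_powSum_mul_le hα hn hs hp hns hnp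

lemma le_setIntegral_pvDensity (hα : ∀ i, α i ∈ Set.Icc (0 : ℝ) 1) (hn : 12 ≤ powSum 2 α) :
    powSum 3 α * (powSum 2 α ^ (-(3 / 2) : ℝ) / 4 -
        π ^ 3 * exp (-(1 / 8) * powSum 2 α ^ (1 / 3 : ℝ)))
      ≤ ∫ v in positiveOctant, pvDensity α v := by
  set n := powSum 2 α
  set m := powSum 3 α
  set t := n ^ (-(1 / 2) : ℝ)
  set E := exp (-(1 / 8) * n ^ (1 / 3 : ℝ))
  have ht3 : t ^ 3 = n ^ (-(3 / 2) : ℝ) := by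
    rw [← rpow_mul_natCast (by linarith)]
    norm_num
  have hvol : (volume.restrict positiveOctant).real (octantCube t) = t ^ 3 := by
    rw [measureReal_def, volume_restrict_positiveOctant_octantCube, ENNReal.toReal_pow,
      ENNReal.toReal_ofReal (by positivity)]
  have hfin : volume.restrict positiveOctant (octantCube t) ≠ ∞ := by
    simp [volume_restrict_positiveOctant_octantCube]
  have hcube (v : ℝ × ℝ × ℝ) (hv : v ∈ octantCube t) :
      m / 4 ≤ pvDensity α v + 8 * m * (E * cauchyWeight v) := by
    have hm : 0 ≤ m := powSum_nonneg 3 fun i => (hα i).1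
    have hw : 0 ≤ cauchyWeight v := cauchyWeight_nonneg v
    have hK : m / 4 ≤ pvDensity α v := le_pvDensity_of_mem_octantCube hα (by linarith) hv
    exact le_add_of_le_of_nonneg hK (by positivity)
  calc m * (n ^ (-(3 / 2) : ℝ) / 4 - π ^ 3 * E)
      = m / 4 * (volume.restrict positiveOctant).real (octantCube t) -
          ∫ v in positiveOctant, 8 * m * (E * cauchyWeight v) := by
        rw [hvol, ht3, integral_const_mul, integral_const_mul, setIntegral_cauchyWeight]
        ring
    _ ≤ ∫ v in positiveOctant, pvDensity α v :=
        mul_measureReal_sub_integral_le_integral (measurableSet_octantCube t) hfin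
          (integrableOn_pvDensity hα hn)
          ((integrable_cauchyWeight.integrableOn.const_mul E).const_mul (8 * m))
          (ae_restrict_of_forall_mem measurableSet_positiveOctant fun _ => neg_le_pvDensity hα hn)
          hcube

lemma pv3_wishChar_eq {d : ℕ} {α : Fin d → ℝ} (hα : ∀ i, α i ∈ Set.Icc (0 : ℝ) 1)
    (hn : 12 ≤ powSum 2 α) :
    pv3 (fun a b c => Complex.I / ((a : ℂ) * (b : ℂ) * (c : ℂ)) * wishChar d α a b c)
      = (∫ v in positiveOctant, pvDensity α v : ℝ) :=
  pv3_eq_setIntegral (integrableOn_pvDensity hα hn) fun a b c _ _ _ =>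
    sum_signs_wishChar α (fun _ _ _ => rfl) a b c

end PvDensity

lemma eventually_pi_pow_three_mul_exp_le : ∀ᶠ n : ℝ in atTop,
    π ^ 3 * exp (-(1 / 8) * n ^ (1 / 3 : ℝ)) ≤ n ^ (-(3 / 2) : ℝ) / 8 := by
  have hlittle := (isLittleO_exp_neg_mul_rpow_rpow_atTop (k := 1 / 8) (r := 1 / 3)
    (by norm_num) (by norm_num) (-(3 / 2))).const_mul_left (π ^ 3)
  filter_upwards [hlittle.bound (show (0 : ℝ) < 1 / 8 by norm_num),
    eventually_ge_atTop 0] with n hbound hn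
  rw [norm_of_nonneg (by positivity), norm_of_nonneg (by positivity)] at hbound
  linarith

theorem pv_integral_lower_bound_general :
    ∃ c > (0 : ℝ), ∀ (d : ℕ) (α : Fin d → ℝ),
      (∀ i, α i ∈ Set.Icc (0 : ℝ) 1) →
      nrm 2 α ^ 2 > c →
      (pv3 (fun a b c =>
          Complex.I / ((a : ℂ) * (b : ℂ) * (c : ℂ)) * wishChar d α a b c)).im = 0 ∧
      (1 / 8) * (nrm 3 α / nrm 2 α) ^ 3
        ≤ (pv3 (fun a b c =>
            Complex.I / ((a : ℂ) * (b : ℂ) * (c : ℂ)) * wishChar d α a b c)).re := by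
  obtain ⟨N, hN⟩ := eventually_atTop.1 eventually_pi_pow_three_mul_exp_le
  refine ⟨max N 12, by positivity, fun d α hα hc => ?_⟩
  have hα0 (i : Fin d) : 0 ≤ α i := (hα i).1
  rw [nrm_pow two_ne_zero hα0, gt_iff_lt, max_lt_iff] at hc
  rw [pv3_wishChar_eq hα hc.2.le, nrm_three_div_nrm_two_pow_three hα0]
  refine ⟨Complex.ofReal_im _, ?_⟩
  calc 1 / 8 * (powSum 3 α * powSum 2 α ^ (-(3 / 2) : ℝ))
      = powSum 3 α * (powSum 2 α ^ (-(3 / 2) : ℝ) / 4 - powSum 2 α ^ (-(3 / 2) : ℝ) / 8) := by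
        ring
    _ ≤ powSum 3 α * (powSum 2 α ^ (-(3 / 2) : ℝ) / 4 -
          π ^ 3 * exp (-(1 / 8) * powSum 2 α ^ (1 / 3 : ℝ))) := by
        gcongr
        · exact powSum_nonneg 3 hα0
        · exact hN _ hc.1.le
    _ ≤ ∫ v in positiveOctant, pvDensity α v := le_setIntegral_pvDensity hα hc.2.le

/-- Lemma 3. There is `c_{1/2} > 0` such that for `α` with entries in
`[0,1]`, some entry equal to `1`, and `‖α‖₂² > c_{1/2}`, the principal value
`PV ∫ (i/(abc)) ∏_i (1 + α_i²(a²+b²+c²) + 2α_i³abc·i)^{-1/2}` is real and at least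
`(1/8)(‖α‖₃/‖α‖₂)³`. -/
theorem pv_integral_lower_bound :
    ∃ c > (0 : ℝ), ∀ (d : ℕ) (α : Fin d → ℝ),
      (∀ i, α i ∈ Set.Icc (0 : ℝ) 1) → (∃ i, α i = 1) →
      nrm 2 α ^ 2 > c →
      (pv3 (fun a b c =>
          Complex.I / ((a : ℂ) * (b : ℂ) * (c : ℂ)) * wishChar d α a b c)).im = 0 ∧
      (1 / 8) * (nrm 3 α / nrm 2 α) ^ 3
        ≤ (pv3 (fun a b c =>
            Complex.I / ((a : ℂ) * (b : ℂ) * (c : ℂ)) * wishChar d α a b c)).re := by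
  obtain ⟨c, hc, h⟩ := pv_integral_lower_bound_general
  exact ⟨c, hc, fun d α hα _ => h d α hα⟩

end
end

section
/- There exist absolute constants c, C, ε > 0 such that the following holds for every α ∈ ℝ^d with entries in [0,1], at least one entry equal to 1, and ‖α‖₂² > c. Define φ₁(a,b,c) = ∏_{i=1}^d (1 + (α_i²/‖α‖₂²)(a²+b²+c²) + 2(α_i³/‖α‖₂³)abc·i)^{−1/2} (principal branch) and ψ₁(a,b,c) = ∏_{i=1}^d ((1+α_i²a²/‖α‖₂²)(1+α_i²b²/‖α‖₂²)(1+α_i²c²/‖α‖₂²))^{−1/2}. Then ∫_{ℝ³} |Re(φ₁(a,b,c)) − ψ₁(a,b,c)| da db dc ≤ C·(‖α‖₃/‖α‖₂)^{3+ε}. -/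
open MeasureTheory ProbabilityTheory Real Filter
open scoped Classical ENNReal NNReal

noncomputable section

/-- The rescaled characteristic function `φ₁` of `(⟨X₁,X₂⟩,⟨X₁,X₃⟩,⟨X₂,X₃⟩)/‖α‖₂`
(principal branch). -/
def phi1 (d : ℕ) (α : Fin d → ℝ) (a b c : ℝ) : ℂ :=
  ∏ i, ((1 : ℂ) + ((α i : ℂ) ^ 2 / (nrm 2 α : ℂ) ^ 2)
        * ((a : ℂ) ^ 2 + (b : ℂ) ^ 2 + (c : ℂ) ^ 2)
      + 2 * ((α i : ℂ) ^ 3 / (nrm 2 α : ℂ) ^ 3) * (a : ℂ) * (b : ℂ) * (c : ℂ) * Complex.I)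
    ^ (-(1 / 2 : ℂ))

/-- The characteristic function `ψ₁` of the independent-coordinates version. -/
def psi1 (d : ℕ) (α : Fin d → ℝ) (a b c : ℝ) : ℝ :=
  ∏ i, ((1 + (α i) ^ 2 * a ^ 2 / nrm 2 α ^ 2) * (1 + (α i) ^ 2 * b ^ 2 / nrm 2 α ^ 2)
      * (1 + (α i) ^ 2 * c ^ 2 / nrm 2 α ^ 2)) ^ (-(1 / 2 : ℝ))

/-!
Write `r i = α i / ‖α‖₂`, `S = a² + b² + c²` and `X = ‖α‖₃ / ‖α‖₂`. The factors of `φ₁` have real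
part `1 + r i² S` and imaginary part `2 r i³ abc`, and the factors of `ψ₁` exceed `1 + r i² S` by
`O(r i⁴)`. In polar form `Re φ₁ = N cos θ` with `θ = O(∑ r i³)`, so both `N cos θ` and `ψ₁` lie
within a relative distance `O(∑ r i⁴ + (∑ r i³)²) = O(X⁴)` of the common upper bound
`P = ∏ (1 + r i² S) ^ (-1/2)`; taking the real part is what removes the term of order `∑ r i³`.
Since `∑ r i² = 1` and `r i² ≤ 1/12`, Bernoulli's inequality gives `P ≤ (1 + S/12)⁻⁶`, which absorbs
the growth of the error in `(a, b, c)` (at most cubic in `S`) and leaves a product of Cauchy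
densities.
-/

section ComplexProducts

variable {ι : Type*} {s : Finset ι}

lemma abs_le_abs_tan {x : ℝ} (hx : |x| < π / 2) : |x| ≤ |tan x| :=
  calc |x| ≤ tan |x| := le_tan (abs_nonneg x) hx
    _ ≤ |tan x| := by
      rcases abs_choice x with h | h <;> rw [h]
      · exact le_abs_self _
      · rw [tan_neg]
        exact neg_le_abs _

lemma abs_arg_le_abs_im_div_re {z : ℂ} (hz : 0 < z.re) : |z.arg| ≤ |z.im / z.re| := by
  rw [← Complex.tan_arg]
  exact abs_le_abs_tan (Complex.abs_arg_lt_pi_div_two_iff.mpr (.inl hz))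

lemma log_norm_sub_log_re_le {z : ℂ} (hz : 0 < z.re) :
    log ‖z‖ - log z.re ≤ (z.im / z.re) ^ 2 / 2 := by
  have hz0 : z ≠ 0 := fun h => hz.ne' (by rw [h, Complex.zero_re])
  have hsq : (‖z‖ / z.re) ^ 2 = 1 + (z.im / z.re) ^ 2 := by
    rw [div_pow, Complex.sq_norm, Complex.normSq_apply]
    field_simp
  have hlog : 2 * (log ‖z‖ - log z.re) = log ((‖z‖ / z.re) ^ 2) := by
    rw [log_pow, log_div (norm_ne_zero_iff.mpr hz0) hz.ne', Nat.cast_ofNat]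
  have hle := log_le_sub_one_of_pos (show 0 < 1 + (z.im / z.re) ^ 2 by positivity)
  rw [hsq] at hlog
  linarith

lemma re_prod_cpow_ofReal (z : ι → ℂ) (p : ℝ) :
    (∏ i ∈ s, z i ^ (p : ℂ)).re = (∏ i ∈ s, ‖z i‖ ^ p) * cos (p * ∑ i ∈ s, (z i).arg) := by
  have hpolar : ∏ i ∈ s, z i ^ (p : ℂ) = ((∏ i ∈ s, ‖z i‖ ^ p : ℝ) : ℂ) *
      Complex.exp ((p * ∑ i ∈ s, (z i).arg : ℝ) * Complex.I) := by
    rw [Finset.mul_sum, Complex.ofReal_sum, Finset.sum_mul, Complex.exp_sum, Complex.ofReal_prod,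
      ← Finset.prod_mul_distrib]
    refine Finset.prod_congr rfl fun i _ => ?_
    rw [Complex.cpow_ofReal, Complex.exp_mul_I, ← Complex.ofReal_cos, ← Complex.ofReal_sin,
      mul_comm p]
  rw [hpolar, Complex.re_ofReal_mul, Complex.exp_ofReal_mul_I_re]

lemma prod_rpow_eq_exp {A : ι → ℝ} (hA : ∀ i ∈ s, 0 < A i) (p : ℝ) :
    ∏ i ∈ s, A i ^ p = exp (p * ∑ i ∈ s, log (A i)) := by
  rw [Finset.mul_sum, exp_sum]
  exact Finset.prod_congr rfl fun i hi => by rw [rpow_def_of_pos (hA i hi), mul_comm]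

lemma prod_rpow_neg_sub_prod_rpow_neg_le {A B : ι → ℝ} (hA : ∀ i ∈ s, 0 < A i)
    (hB : ∀ i ∈ s, 0 < B i) (p : ℝ) :
    ∏ i ∈ s, A i ^ (-p) - ∏ i ∈ s, B i ^ (-p) ≤
      (∏ i ∈ s, A i ^ (-p)) * (p * ∑ i ∈ s, (log (B i) - log (A i))) := by
  rw [prod_rpow_eq_exp hA, prod_rpow_eq_exp hB, Finset.sum_sub_distrib]
  set x := ∑ i ∈ s, log (A i)
  set y := ∑ i ∈ s, log (B i)
  calc exp (-p * x) - exp (-p * y) = exp (-p * x) * (1 - exp (-(p * (y - x)))) := by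
        rw [mul_sub, mul_one, ← exp_add]
        ring_nf
    _ ≤ exp (-p * x) * (p * (y - x)) := by
        gcongr
        linarith [one_sub_le_exp_neg (p * (y - x))]

variable {z : ι → ℂ}

lemma one_sub_cos_sum_arg_le (p : ℝ) (hz : ∀ i ∈ s, 0 < (z i).re) :
    1 - cos (p * ∑ i ∈ s, (z i).arg) ≤
      p ^ 2 / 2 * (∑ i ∈ s, |(z i).im / (z i).re|) ^ 2 := by
  have harg : |∑ i ∈ s, (z i).arg| ≤ ∑ i ∈ s, |(z i).im / (z i).re| :=
    (Finset.abs_sum_le_sum_abs _ _).trans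
      (Finset.sum_le_sum fun i hi => abs_arg_le_abs_im_div_re (hz i hi))
  calc 1 - cos (p * ∑ i ∈ s, (z i).arg) ≤ (p * ∑ i ∈ s, (z i).arg) ^ 2 / 2 := by
        linarith [one_sub_sq_div_two_le_cos (x := p * ∑ i ∈ s, (z i).arg)]
    _ = p ^ 2 / 2 * |∑ i ∈ s, (z i).arg| ^ 2 := by rw [sq_abs]; ring
    _ ≤ p ^ 2 / 2 * (∑ i ∈ s, |(z i).im / (z i).re|) ^ 2 := by gcongr

variable {p : ℝ}

lemma prod_re_rpow_neg_sub_prod_norm_rpow_neg_le (hp : 0 ≤ p) (hz : ∀ i ∈ s, 0 < (z i).re) :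
    ∏ i ∈ s, (z i).re ^ (-p) - ∏ i ∈ s, ‖z i‖ ^ (-p) ≤
      (∏ i ∈ s, (z i).re ^ (-p)) * (p / 2 * (∑ i ∈ s, |(z i).im / (z i).re|) ^ 2) := by
  have hnorm : ∀ i ∈ s, 0 < ‖z i‖ := fun i hi => (hz i hi).trans_le (Complex.re_le_norm _)
  have hlog : ∑ i ∈ s, (log ‖z i‖ - log (z i).re) ≤
      (∑ i ∈ s, |(z i).im / (z i).re|) ^ 2 / 2 :=
    calc ∑ i ∈ s, (log ‖z i‖ - log (z i).re)
        ≤ ∑ i ∈ s, |(z i).im / (z i).re| ^ 2 / 2 := Finset.sum_le_sum fun i hi => by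
          rw [sq_abs]
          exact log_norm_sub_log_re_le (hz i hi)
      _ ≤ (∑ i ∈ s, |(z i).im / (z i).re|) ^ 2 / 2 := by
          rw [← Finset.sum_div]
          gcongr
          exact Finset.sum_sq_le_sq_sum_of_nonneg fun i _ => abs_nonneg _
  refine (prod_rpow_neg_sub_prod_rpow_neg_le hz hnorm p).trans
    (mul_le_mul_of_nonneg_left ?_ (Finset.prod_nonneg fun i hi => rpow_nonneg (hz i hi).le _))
  linarith [mul_le_mul_of_nonneg_left hlog hp]

lemma abs_re_prod_cpow_neg_sub_prod_rpow_neg_le {B : ι → ℝ} (hp : 0 ≤ p)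
    (hz : ∀ i ∈ s, 0 < (z i).re) (hB : ∀ i ∈ s, (z i).re ≤ B i) :
    |(∏ i ∈ s, z i ^ ((-p : ℝ) : ℂ)).re - ∏ i ∈ s, B i ^ (-p)| ≤
      (∏ i ∈ s, (z i).re ^ (-p)) * (p * ∑ i ∈ s, (log (B i) - log (z i).re)
        + (p + p ^ 2) / 2 * (∑ i ∈ s, |(z i).im / (z i).re|) ^ 2) := by
  have hanti : ∀ w : ι → ℝ, (∀ i ∈ s, (z i).re ≤ w i) →
      0 ≤ ∏ i ∈ s, w i ^ (-p) ∧ ∏ i ∈ s, w i ^ (-p) ≤ ∏ i ∈ s, (z i).re ^ (-p) := fun w hw =>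
    have hw0 : ∀ i ∈ s, 0 ≤ w i ^ (-p) := fun i hi =>
      rpow_nonneg ((hz i hi).le.trans (hw i hi)) _
    ⟨Finset.prod_nonneg hw0, Finset.prod_le_prod hw0 fun i hi =>
      rpow_le_rpow_of_nonpos (hz i hi) (hw i hi) (neg_nonpos.mpr hp)⟩
  obtain ⟨-, hQP⟩ := hanti B hB
  obtain ⟨hN, hNP⟩ := hanti (fun i => ‖z i‖) fun i _ => Complex.re_le_norm _
  have hPQ := prod_rpow_neg_sub_prod_rpow_neg_le hz (fun i hi => (hz i hi).trans_le (hB i hi)) p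
  have hPN := prod_re_rpow_neg_sub_prod_norm_rpow_neg_le hp hz
  have hcos := one_sub_cos_sum_arg_le (-p) hz
  rw [neg_sq] at hcos
  rw [re_prod_cpow_ofReal]
  set P := ∏ i ∈ s, (z i).re ^ (-p)
  set N := ∏ i ∈ s, ‖z i‖ ^ (-p)
  set Q := ∏ i ∈ s, B i ^ (-p)
  set θ := -p * ∑ i ∈ s, (z i).arg
  set T := (∑ i ∈ s, |(z i).im / (z i).re|) ^ 2
  have hNcos : N * cos θ ≤ N := mul_le_of_le_one_right hN (cos_le_one θ)
  have hNcos' : N * (1 - cos θ) ≤ P * (p ^ 2 / 2 * T) :=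
    mul_le_mul hNP hcos (sub_nonneg.mpr (cos_le_one θ)) (hN.trans hNP)
  rw [abs_sub_le_iff]
  constructor <;> linarith

end ComplexProducts

section PowerNorms

variable {d : ℕ} {α : Fin d → ℝ} {q : ℕ}

lemma nrm_nonneg (hα : ∀ i, 0 ≤ α i) : 0 ≤ nrm q α :=
  rpow_nonneg (Finset.sum_nonneg fun i _ => pow_nonneg (hα i) q) _

lemma nrm_pow_self (hα : ∀ i, 0 ≤ α i) (hq : q ≠ 0) : nrm q α ^ q = ∑ i, α i ^ q := by
  rw [nrm, one_div]
  exact rpow_inv_natCast_pow (Finset.sum_nonneg fun i _ => pow_nonneg (hα i) q) hq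

lemma le_nrm (hα : ∀ i, 0 ≤ α i) (hq : q ≠ 0) (i : Fin d) : α i ≤ nrm q α := by
  refine le_of_pow_le_pow_left₀ hq (nrm_nonneg hα) ?_
  rw [nrm_pow_self hα hq]
  exact Finset.single_le_sum (f := fun i => α i ^ q) (fun j _ => pow_nonneg (hα j) q)
    (Finset.mem_univ i)

lemma sum_pow_le_nrm_pow (hα : ∀ i, 0 ≤ α i) (hq : q ≠ 0) {p : ℕ} (hqp : q ≤ p) :
    ∑ i, α i ^ p ≤ nrm q α ^ p := by
  obtain ⟨k, rfl⟩ := Nat.exists_eq_add_of_le hqp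
  calc ∑ i, α i ^ (q + k) ≤ ∑ i, α i ^ q * nrm q α ^ k := Finset.sum_le_sum fun i _ => by
        rw [pow_add]
        exact mul_le_mul_of_nonneg_left (pow_le_pow_left₀ (hα i) (le_nrm hα hq i) k)
          (pow_nonneg (hα i) q)
    _ = nrm q α ^ (q + k) := by rw [← Finset.sum_mul, ← nrm_pow_self hα hq, pow_add]

lemma nrm_antitone (hα : ∀ i, 0 ≤ α i) (hq : q ≠ 0) {p : ℕ} (hqp : q ≤ p) :
    nrm p α ≤ nrm q α := by
  have hp : p ≠ 0 := by omega
  refine le_of_pow_le_pow_left₀ hp (nrm_nonneg hα) ?_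
  rw [nrm_pow_self hα hp]
  exact sum_pow_le_nrm_pow hα hq hqp

lemma sum_div_pow_le_nrm_div_pow (hα : ∀ i, 0 ≤ α i) (hq : q ≠ 0) {p : ℕ} (hqp : q ≤ p) {N : ℝ}
    (hN : 0 ≤ N) : ∑ i, (α i / N) ^ p ≤ (nrm q α / N) ^ p := by
  simp only [div_pow]
  rw [← Finset.sum_div]
  gcongr
  exact sum_pow_le_nrm_pow hα hq hqp

lemma sum_div_nrm_pow_self (hα : ∀ i, 0 ≤ α i) (hq : q ≠ 0) (hN : nrm q α ≠ 0) :
    ∑ i, (α i / nrm q α) ^ q = 1 := by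
  simp only [div_pow]
  rw [← Finset.sum_div, ← nrm_pow_self hα hq, div_self (pow_ne_zero q hN)]

end PowerNorms

section Decay

lemma one_add_div_rpow_le_prod_one_add_mul {ι : Type*} {s : Finset ι} {w : ι → ℝ} {m S : ℝ}
    (hm : 0 < m) (hS : 0 ≤ S) (hw : ∀ i ∈ s, 0 ≤ w i) (hwm : ∀ i ∈ s, m * w i ≤ 1) :
    (1 + S / m) ^ (m * ∑ i ∈ s, w i) ≤ ∏ i ∈ s, (1 + w i * S) := by
  have hSm : 0 ≤ S / m := by positivity
  rw [Finset.mul_sum, rpow_sum_of_pos (by positivity)]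
  refine Finset.prod_le_prod (fun i _ => by positivity) fun i hi => ?_
  have hbernoulli := rpow_one_add_le_one_add_mul_self (by linarith : -1 ≤ S / m)
    (mul_nonneg hm.le (hw i hi)) (hwm i hi)
  rwa [mul_right_comm, mul_div_cancel₀ S hm.ne', mul_comm S] at hbernoulli

lemma prod_one_add_mul_rpow_neg_half_le {ι : Type*} {s : Finset ι} {w : ι → ℝ} {S : ℝ}
    (hS : 0 ≤ S) (hw : ∀ i ∈ s, 0 ≤ w i) (hw12 : ∀ i ∈ s, 12 * w i ≤ 1)
    (hsum : ∑ i ∈ s, w i = 1) :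
    ∏ i ∈ s, (1 + w i * S) ^ (-(1 / 2) : ℝ) ≤ ((1 + S / 12) ^ 6)⁻¹ := by
  have hprod := one_add_div_rpow_le_prod_one_add_mul (by norm_num) hS hw hw12
  rw [hsum, mul_one] at hprod
  have hpos : 0 < 1 + S / 12 := by positivity
  calc ∏ i ∈ s, (1 + w i * S) ^ (-(1 / 2) : ℝ)
      = (∏ i ∈ s, (1 + w i * S)) ^ (-(1 / 2) : ℝ) :=
        finsetProd_rpow _ _ (fun i hi => by have := hw i hi; positivity) _
    _ ≤ ((1 + S / 12) ^ (12 : ℝ)) ^ (-(1 / 2) : ℝ) :=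
        rpow_le_rpow_of_nonpos (by positivity) hprod (by norm_num)
    _ = ((1 + S / 12) ^ 6)⁻¹ := by
        rw [← rpow_mul hpos.le, ← rpow_natCast, ← rpow_neg hpos.le]
        norm_num

-- Scale `4` rather than `√12` keeps the constants rational.
lemma polynomial_mul_decay_le_cauchyPDFReal (a b c : ℝ) :
    ((1 + (a ^ 2 + b ^ 2 + c ^ 2) / 12) ^ 6)⁻¹ *
        ((a ^ 2 * b ^ 2 + b ^ 2 * c ^ 2 + c ^ 2 * a ^ 2) / 2 + 2 * (a * b * c) ^ 2) ≤
      221184 * π ^ 3 *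
        (cauchyPDFReal 0 4 a * (cauchyPDFReal 0 4 b * cauchyPDFReal 0 4 c)) := by
  set S := a ^ 2 + b ^ 2 + c ^ 2 with hS
  have ha : a ^ 2 ≤ S := by linarith [sq_nonneg b, sq_nonneg c]
  have hb : b ^ 2 ≤ S := by linarith [sq_nonneg a, sq_nonneg c]
  have hc : c ^ 2 ≤ S := by linarith [sq_nonneg a, sq_nonneg b]
  have hS0 : 0 ≤ S := by positivity
  have hpair : a ^ 2 * b ^ 2 + b ^ 2 * c ^ 2 + c ^ 2 * a ^ 2 ≤ S ^ 2 := by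
    rw [hS]
    nlinarith only [sq_nonneg (a ^ 2), sq_nonneg (b ^ 2), sq_nonneg (c ^ 2), sq_nonneg (a * b),
      sq_nonneg (b * c), sq_nonneg (c * a)]
  have htriple : (a * b * c) ^ 2 ≤ S ^ 3 :=
    calc (a * b * c) ^ 2 = a ^ 2 * b ^ 2 * c ^ 2 := by ring
      _ ≤ S * S * S := by gcongr
      _ = S ^ 3 := by ring
  have hcubic : (a ^ 2 * b ^ 2 + b ^ 2 * c ^ 2 + c ^ 2 * a ^ 2) / 2 + 2 * (a * b * c) ^ 2 ≤
      3456 * (1 + S / 12) ^ 3 := by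
    nlinarith only [hpair, htriple, hS0, sq_nonneg S]
  have hfactors : (1 + (a / 4) ^ 2) * ((1 + (b / 4) ^ 2) * (1 + (c / 4) ^ 2)) ≤
      (1 + S / 12) ^ 3 := by
    rw [pow_three]
    gcongr <;> linarith
  have hcauchy (x : ℝ) : (1 + (x / 4) ^ 2)⁻¹ = 4 * π * cauchyPDFReal 0 4 x := by
    rw [cauchyPDFReal_def', sub_zero, NNReal.coe_inv, NNReal.coe_ofNat]
    field_simp
  calc ((1 + S / 12) ^ 6)⁻¹ *
        ((a ^ 2 * b ^ 2 + b ^ 2 * c ^ 2 + c ^ 2 * a ^ 2) / 2 + 2 * (a * b * c) ^ 2)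
      ≤ ((1 + S / 12) ^ 6)⁻¹ * (3456 * (1 + S / 12) ^ 3) := by gcongr
    _ = 3456 * ((1 + S / 12) ^ 3)⁻¹ := by
        have : 1 + S / 12 ≠ 0 := by positivity
        field_simp
    _ ≤ 3456 * ((1 + (a / 4) ^ 2) * ((1 + (b / 4) ^ 2) * (1 + (c / 4) ^ 2)))⁻¹ := by gcongr
    _ = 221184 * π ^ 3 *
        (cauchyPDFReal 0 4 a * (cauchyPDFReal 0 4 b * cauchyPDFReal 0 4 c)) := by
        rw [mul_inv, mul_inv, hcauchy, hcauchy, hcauchy]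
        ring

lemma integrable_cauchyPDFReal_prod (γ : ℝ≥0) :
    Integrable fun v : ℝ × ℝ × ℝ =>
      cauchyPDFReal 0 γ v.1 * (cauchyPDFReal 0 γ v.2.1 * cauchyPDFReal 0 γ v.2.2) :=
  (integrable_cauchyPDFReal 0).mul_prod
    ((integrable_cauchyPDFReal 0).mul_prod (integrable_cauchyPDFReal 0))

lemma integral_cauchyPDFReal_prod {γ : ℝ≥0} (hγ : γ ≠ 0) :
    ∫ v : ℝ × ℝ × ℝ,
      cauchyPDFReal 0 γ v.1 * (cauchyPDFReal 0 γ v.2.1 * cauchyPDFReal 0 γ v.2.2) = 1 := by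
  rw [Measure.volume_eq_prod, integral_prod_mul (cauchyPDFReal 0 γ)
      fun w : ℝ × ℝ => cauchyPDFReal 0 γ w.1 * cauchyPDFReal 0 γ w.2,
    Measure.volume_eq_prod, integral_prod_mul, integral_cauchyPDFReal_eq_one 0 hγ, mul_one, mul_one]

end Decay

section Factors

/-- The factor of `φ₁` belonging to the normalized weight `r = α i / ‖α‖₂`, before the power
`-1/2` is taken. It is given by its real and imaginary parts, which are estimated separately. -/
def phiFactor (r a b c : ℝ) : ℂ :=
  ⟨1 + r ^ 2 * (a ^ 2 + b ^ 2 + c ^ 2), 2 * r ^ 3 * (a * b * c)⟩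

/-- The factor of `ψ₁` belonging to the normalized weight `r = α i / ‖α‖₂`, before the power
`-1/2` is taken. It is compared with the real part of `phiFactor r a b c`. -/
def psiFactor (r a b c : ℝ) : ℝ :=
  (1 + r ^ 2 * a ^ 2) * (1 + r ^ 2 * b ^ 2) * (1 + r ^ 2 * c ^ 2)

variable {d : ℕ} (α : Fin d → ℝ) (r a b c : ℝ)

lemma phi1_eq_prod_phiFactor_cpow :
    phi1 d α a b c = ∏ i, phiFactor (α i / nrm 2 α) a b c ^ ((-(1 / 2) : ℝ) : ℂ) := by
  refine Finset.prod_congr rfl fun i _ => ?_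
  rw [phiFactor, Complex.mk_eq_add_mul_I]
  push_cast
  ring_nf

lemma psi1_eq_prod_psiFactor_rpow :
    psi1 d α a b c = ∏ i, psiFactor (α i / nrm 2 α) a b c ^ (-(1 / 2) : ℝ) := by
  simp only [psi1, psiFactor, div_pow, mul_div_right_comm]

lemma one_le_phiFactor_re : 1 ≤ (phiFactor r a b c).re :=
  le_add_of_nonneg_right (by positivity)

lemma psiFactor_eq_phiFactor_re_add :
    psiFactor r a b c = (phiFactor r a b c).re +
      (r ^ 4 * (a ^ 2 * b ^ 2 + b ^ 2 * c ^ 2 + c ^ 2 * a ^ 2) + r ^ 6 * (a * b * c) ^ 2) := by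
  simp only [psiFactor, phiFactor]
  ring

lemma phiFactor_re_le_psiFactor : (phiFactor r a b c).re ≤ psiFactor r a b c := by
  rw [psiFactor_eq_phiFactor_re_add]
  exact le_add_of_nonneg_right (by positivity)

lemma log_psiFactor_sub_log_phiFactor_re_le :
    log (psiFactor r a b c) - log (phiFactor r a b c).re ≤
      r ^ 4 * (a ^ 2 * b ^ 2 + b ^ 2 * c ^ 2 + c ^ 2 * a ^ 2) + r ^ 6 * (a * b * c) ^ 2 := by
  have hre := one_le_phiFactor_re r a b c
  rw [psiFactor_eq_phiFactor_re_add]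
  set x := (phiFactor r a b c).re
  set e := r ^ 4 * (a ^ 2 * b ^ 2 + b ^ 2 * c ^ 2 + c ^ 2 * a ^ 2) + r ^ 6 * (a * b * c) ^ 2
  have he : 0 ≤ e := by positivity
  calc log (x + e) - log x = log ((x + e) / x) := (log_div (by positivity) (by positivity)).symm
    _ ≤ (x + e) / x - 1 := log_le_sub_one_of_pos (by positivity)
    _ = e / x := by rw [add_div, div_self (by positivity), add_sub_cancel_left]
    _ ≤ e := div_le_self he hre

variable {r} in
lemma abs_phiFactor_im_div_re_le (hr : 0 ≤ r) :
    |(phiFactor r a b c).im / (phiFactor r a b c).re| ≤ 2 * r ^ 3 * |a * b * c| :=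
  calc |(phiFactor r a b c).im / (phiFactor r a b c).re|
      ≤ |(phiFactor r a b c).im| := by
        rw [abs_div]
        exact div_le_self (abs_nonneg _) ((one_le_phiFactor_re r a b c).trans (le_abs_self _))
    _ = 2 * r ^ 3 * |a * b * c| := by
        rw [phiFactor, abs_mul, abs_of_nonneg (by positivity : 0 ≤ 2 * r ^ 3)]

end Factors

section CharacteristicFunctions

variable {d : ℕ} {α : Fin d → ℝ}

variable (α) in
lemma measurable_re_phi1_sub_psi1 :
    Measurable fun v : ℝ × ℝ × ℝ =>
      (phi1 d α v.1 v.2.1 v.2.2).re - psi1 d α v.1 v.2.1 v.2.2 := by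
  unfold phi1 psi1
  fun_prop

lemma abs_re_phi1_sub_psi1_le_sum (hα : ∀ i, 0 ≤ α i) (a b c : ℝ) :
    |(phi1 d α a b c).re - psi1 d α a b c| ≤
      (∏ i, (1 + (α i / nrm 2 α) ^ 2 * (a ^ 2 + b ^ 2 + c ^ 2)) ^ (-(1 / 2) : ℝ)) *
        ((∑ i, (α i / nrm 2 α) ^ 4) * (a ^ 2 * b ^ 2 + b ^ 2 * c ^ 2 + c ^ 2 * a ^ 2) / 2
          + (∑ i, (α i / nrm 2 α) ^ 6) * (a * b * c) ^ 2 / 2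
          + 3 / 2 * (∑ i, (α i / nrm 2 α) ^ 3) ^ 2 * (a * b * c) ^ 2) := by
  have hlog := Finset.sum_le_sum fun i (_ : i ∈ Finset.univ) =>
    log_psiFactor_sub_log_phiFactor_re_le (α i / nrm 2 α) a b c
  rw [Finset.sum_add_distrib, ← Finset.sum_mul, ← Finset.sum_mul] at hlog
  have htan := Finset.sum_le_sum fun i (_ : i ∈ Finset.univ) =>
    abs_phiFactor_im_div_re_le a b c (div_nonneg (hα i) (nrm_nonneg (q := 2) hα))
  rw [← Finset.sum_mul, ← Finset.mul_sum] at htan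
  have htan_sq := pow_le_pow_left₀ (Finset.sum_nonneg fun i _ => abs_nonneg _) htan 2
  rw [mul_pow, sq_abs] at htan_sq
  rw [phi1_eq_prod_phiFactor_cpow, psi1_eq_prod_psiFactor_rpow]
  refine (abs_re_prod_cpow_neg_sub_prod_rpow_neg_le (by norm_num)
    (fun i _ => one_pos.trans_le (one_le_phiFactor_re _ a b c))
    fun i _ => phiFactor_re_le_psiFactor _ a b c).trans
    (mul_le_mul_of_nonneg_left ?_ (Finset.prod_nonneg fun i _ =>
      rpow_nonneg (zero_le_one.trans (one_le_phiFactor_re _ a b c)) _))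
  linarith

lemma abs_re_phi1_sub_psi1_le_nrm_div_pow_four (hα : ∀ i, 0 ≤ α i) (hN : 0 < nrm 2 α)
    (a b c : ℝ) :
    |(phi1 d α a b c).re - psi1 d α a b c| ≤
      (∏ i, (1 + (α i / nrm 2 α) ^ 2 * (a ^ 2 + b ^ 2 + c ^ 2)) ^ (-(1 / 2) : ℝ)) *
        ((nrm 3 α / nrm 2 α) ^ 4 *
          ((a ^ 2 * b ^ 2 + b ^ 2 * c ^ 2 + c ^ 2 * a ^ 2) / 2 + 2 * (a * b * c) ^ 2)) := by
  set X := nrm 3 α / nrm 2 α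
  have hX0 : 0 ≤ X := div_nonneg (nrm_nonneg hα) hN.le
  have hX1 : X ≤ 1 := (div_le_one hN).mpr (nrm_antitone hα two_ne_zero (by norm_num))
  have hX6 : X ^ 6 ≤ X ^ 4 := pow_le_pow_of_le_one hX0 hX1 (by norm_num)
  have hsum (p : ℕ) (hp : 3 ≤ p) : ∑ i, (α i / nrm 2 α) ^ p ≤ X ^ p :=
    sum_div_pow_le_nrm_div_pow hα three_ne_zero hp hN.le
  have hsum4 := hsum 4 (by norm_num)
  have hsum6 := (hsum 6 (by norm_num)).trans hX6
  have hsum3 : (∑ i, (α i / nrm 2 α) ^ 3) ^ 2 ≤ X ^ 4 :=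
    calc (∑ i, (α i / nrm 2 α) ^ 3) ^ 2 ≤ (X ^ 3) ^ 2 := pow_le_pow_left₀
          (Finset.sum_nonneg fun i _ => pow_nonneg (div_nonneg (hα i) hN.le) 3) (hsum 3 le_rfl) 2
      _ ≤ X ^ 4 := by rwa [← pow_mul]
  set e₂ := a ^ 2 * b ^ 2 + b ^ 2 * c ^ 2 + c ^ 2 * a ^ 2
  set e₃ := (a * b * c) ^ 2
  refine (abs_re_phi1_sub_psi1_le_sum hα a b c).trans
    (mul_le_mul_of_nonneg_left ?_ (Finset.prod_nonneg fun i _ => by positivity))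
  calc _ ≤ X ^ 4 * e₂ / 2 + X ^ 4 * e₃ / 2 + 3 / 2 * X ^ 4 * e₃ := by gcongr
    _ = X ^ 4 * (e₂ / 2 + 2 * e₃) := by ring

lemma abs_re_phi1_sub_psi1_le_cauchyPDFReal (hα : ∀ i, 0 ≤ α i) (hN : 0 < nrm 2 α)
    (hα12 : ∀ i, 12 * α i ^ 2 ≤ nrm 2 α ^ 2) (a b c : ℝ) :
    |(phi1 d α a b c).re - psi1 d α a b c| ≤
      221184 * π ^ 3 * (nrm 3 α / nrm 2 α) ^ 4 *
        (cauchyPDFReal 0 4 a * (cauchyPDFReal 0 4 b * cauchyPDFReal 0 4 c)) := by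
  have hX4 : 0 ≤ (nrm 3 α / nrm 2 α) ^ 4 := pow_nonneg (div_nonneg (nrm_nonneg hα) hN.le) 4
  have hweight (i : Fin d) : 12 * (α i / nrm 2 α) ^ 2 ≤ 1 := by
    rw [div_pow, ← mul_div_assoc]
    exact div_le_one_of_le₀ (hα12 i) (sq_nonneg _)
  have hdecay := prod_one_add_mul_rpow_neg_half_le (S := a ^ 2 + b ^ 2 + c ^ 2) (by positivity)
    (fun i _ => sq_nonneg (α i / nrm 2 α)) (fun i _ => hweight i)
    (sum_div_nrm_pow_self hα two_ne_zero hN.ne')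
  refine (abs_re_phi1_sub_psi1_le_nrm_div_pow_four hα hN a b c).trans
    ((mul_le_mul_of_nonneg_right hdecay (by positivity)).trans ?_)
  linarith [mul_le_mul_of_nonneg_left (polynomial_mul_decay_le_cauchyPDFReal a b c) hX4]

end CharacteristicFunctions

theorem integral_re_phi_sub_psi_bound_general {d : ℕ} {α : Fin d → ℝ} (hα : ∀ i, 0 ≤ α i)
    (hN : 0 < nrm 2 α) (hα12 : ∀ i, 12 * α i ^ 2 ≤ nrm 2 α ^ 2) :
    Integrable (fun v : ℝ × ℝ × ℝ => (phi1 d α v.1 v.2.1 v.2.2).re - psi1 d α v.1 v.2.1 v.2.2) ∧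
      ∫ v : ℝ × ℝ × ℝ, |(phi1 d α v.1 v.2.1 v.2.2).re - psi1 d α v.1 v.2.1 v.2.2| ≤
        221184 * π ^ 3 * (nrm 3 α / nrm 2 α) ^ 4 := by
  have hbound (v : ℝ × ℝ × ℝ) :=
    abs_re_phi1_sub_psi1_le_cauchyPDFReal hα hN hα12 v.1 v.2.1 v.2.2
  have hmajorant := (integrable_cauchyPDFReal_prod 4).const_mul
    (221184 * π ^ 3 * (nrm 3 α / nrm 2 α) ^ 4)
  have hint := hmajorant.mono' (measurable_re_phi1_sub_psi1 α).aestronglyMeasurable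
    (.of_forall hbound)
  refine ⟨hint, (integral_mono hint.abs hmajorant hbound).trans_eq ?_⟩
  rw [integral_const_mul, integral_cauchyPDFReal_prod four_ne_zero, mul_one]

/-- Lemma 5. There are absolute constants `c, C, ε > 0` such that
whenever `α` has entries in `[0,1]`, some entry equal to `1`, and `‖α‖₂² > c`,
`∫_{ℝ³} |Re φ₁ - ψ₁| ≤ C (‖α‖₃/‖α‖₂)^{3+ε}`. -/
theorem integral_re_phi_sub_psi_bound :
    ∃ c > (0 : ℝ), ∃ C > (0 : ℝ), ∃ ε > (0 : ℝ),
      ∀ (d : ℕ) (α : Fin d → ℝ),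
        (∀ i, α i ∈ Set.Icc (0 : ℝ) 1) → (∃ i, α i = 1) →
        nrm 2 α ^ 2 > c →
        (∫ v : ℝ × ℝ × ℝ,
            |(phi1 d α v.1 v.2.1 v.2.2).re - psi1 d α v.1 v.2.1 v.2.2|)
          ≤ C * (nrm 3 α / nrm 2 α) ^ ((3 : ℝ) + ε) := by
  refine ⟨12, by norm_num, 221184 * π ^ 3, by positivity, 1, one_pos, fun d α hα _ hN => ?_⟩
  have hα0 (i : Fin d) : 0 ≤ α i := (hα i).1
  have hN0 : nrm 2 α ≠ 0 := fun h => by norm_num [h] at hN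
  have hα12 (i : Fin d) : 12 * α i ^ 2 ≤ nrm 2 α ^ 2 := by
    linarith [pow_le_one₀ (n := 2) (hα0 i) (hα i).2]
  calc _ ≤ _ := (integral_re_phi_sub_psi_bound_general hα0
        ((nrm_nonneg hα0).lt_of_ne' hN0) hα12).2
    _ = _ := by rw [← rpow_natCast]; norm_num

end
end
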